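/- For every positive integer m, the lower Minkowski dimension of C_m is at least 1/2; equivalently, limsup_{δ→0⁺} log λ(V_δ(C_m)) / log δ ≤ 1/2. -/

import Mathlib

/-!
Fix every partial quotient but the first: for `m = k + 1`, the set `C_m` contains the points
`1 / (n + θ)`, `n ≥ 2`, where `θ = [2, …, 2]` has length `k`. The gap between two consecutive such
points near `x` is of order `x ^ 2`, so the `δ`-neighbourhood of `C_m` covers an interval
`(0, c √δ)` with `c > 0` fixed, and its measure is at least `c √δ`.
-/

open MeasureTheory Filter Set

/-- The closed `δ`-neighbourhood `V_δ(Ω) = {x : ∃ y ∈ Ω, |x - y| ≤ δ}`. -/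
def closedNbhd (Ω : Set ℝ) (δ : ℝ) : Set ℝ := {x : ℝ | ∃ y ∈ Ω, |x - y| ≤ δ}

/-- The value `g(a₁ ⋯ a_k) = 1/(a₁ + 1/(a₂ + ⋯ + 1/a_k))` of a finite continued fraction. -/
noncomputable def cfVal : List ℕ → ℝ
  | [] => 0
  | a :: t => 1 / ((a : ℝ) + cfVal t)

/-- A word of positive integers whose last letter (if any) is at least `2`. -/
def isCFWord (a : List ℕ) : Prop := (∀ x ∈ a, 1 ≤ x) ∧ ∀ ℓ ∈ a.getLast?, 2 ≤ ℓ

/-- `C_m`: the set of rationals in `(0,1)` whose continued fraction expansion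
has length `m`. -/
def Cset (m : ℕ) : Set ℝ :=
  {x : ℝ | ∃ a : List ℕ, a.length = m ∧ isCFWord a ∧ x = cfVal a}

open scoped Topology

/-- The lower Minkowski codimension of `Ω`, i.e. `1` minus its lower Minkowski dimension. It is the
real `limsup`, so it carries the intended value only when the quotient stays bounded near `0`, as it
does for nonempty bounded `Ω`. -/
noncomputable def lowerMinkowskiCodim (Ω : Set ℝ) : ℝ :=
  limsup (fun δ : ℝ => Real.log (volume.real (closedNbhd Ω δ)) / Real.log δ) (𝓝[>] 0)

section LogarithmicQuotients

variable {v : ℝ → ℝ}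

lemma log_div_log_le_add {c s δ y : ℝ} (hc : 0 < c) (hδ : 0 < δ) (hδ1 : δ < 1)
    (h : c * δ ^ s ≤ y) : Real.log y / Real.log δ ≤ s + Real.log c / Real.log δ := by
  have hlog : Real.log δ < 0 := Real.log_neg hδ hδ1
  have hpow : 0 < δ ^ s := Real.rpow_pos_of_pos hδ s
  have hle : Real.log c + s * Real.log δ ≤ Real.log y := by
    simpa only [Real.log_mul hc.ne' hpow.ne', Real.log_rpow hδ]
      using Real.log_le_log (by positivity) h
  rw [div_le_iff_of_neg hlog, add_mul, div_mul_cancel₀ _ hlog.ne]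
  linarith

lemma isBoundedUnder_ge_log_div_log (hpos : ∀ᶠ δ in 𝓝[>] 0, 0 < v δ)
    (hbdd : IsBoundedUnder (· ≤ ·) (𝓝[>] 0) v) :
    IsBoundedUnder (· ≥ ·) (𝓝[>] 0) fun δ => Real.log (v δ) / Real.log δ := by
  obtain ⟨M, hM⟩ := hbdd
  have hlim : Tendsto (fun δ => Real.log M / Real.log δ) (𝓝[>] 0) (𝓝 0) :=
    Real.tendsto_log_nhdsGT_zero.const_div_atBot _
  refine hlim.isBoundedUnder_ge.mono_ge ?_
  filter_upwards [hpos, hM, Ioo_mem_nhdsGT one_pos] with δ hv hvM hδ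
  exact div_le_div_of_nonpos_of_le (Real.log_neg hδ.1 hδ.2).le (Real.log_le_log hv hvM)

theorem limsup_log_div_log_le {c s : ℝ} (hc : 0 < c) (hlow : ∀ᶠ δ in 𝓝[>] 0, c * δ ^ s ≤ v δ)
    (hbdd : IsBoundedUnder (· ≤ ·) (𝓝[>] 0) v) :
    limsup (fun δ => Real.log (v δ) / Real.log δ) (𝓝[>] 0) ≤ s := by
  have hlim : Tendsto (fun δ => s + Real.log c / Real.log δ) (𝓝[>] 0) (𝓝 s) := by
    simpa only [add_zero] using (Real.tendsto_log_nhdsGT_zero.const_div_atBot _).const_add s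
  have hpos : ∀ᶠ δ in 𝓝[>] 0, 0 < v δ := by
    filter_upwards [hlow, self_mem_nhdsWithin] with δ hδ hδ0
    exact (mul_pos hc (Real.rpow_pos_of_pos hδ0 s)).trans_le hδ
  have hle : ∀ᶠ δ in 𝓝[>] 0, Real.log (v δ) / Real.log δ ≤ s + Real.log c / Real.log δ := by
    filter_upwards [hlow, Ioo_mem_nhdsGT one_pos] with δ hv hδ
    exact log_div_log_le_add hc hδ.1 hδ.2 hv
  calc limsup (fun δ => Real.log (v δ) / Real.log δ) (𝓝[>] 0)
      ≤ limsup (fun δ => s + Real.log c / Real.log δ) (𝓝[>] 0) :=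
        limsup_le_limsup hle (isBoundedUnder_ge_log_div_log hpos hbdd).isCoboundedUnder_le
          hlim.isBoundedUnder_le
    _ = s := hlim.limsup_eq

end LogarithmicQuotients

section MinkowskiCodimension

variable {Ω : Set ℝ}

lemma closedNbhd_mono {δ ε : ℝ} (h : δ ≤ ε) : closedNbhd Ω δ ⊆ closedNbhd Ω ε :=
  fun _ ⟨y, hy, hxy⟩ => ⟨y, hy, hxy.trans h⟩

lemma closedNbhd_subset_cthickening (Ω : Set ℝ) (δ : ℝ) :
    closedNbhd Ω δ ⊆ Metric.cthickening δ Ω :=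
  fun x ⟨y, hy, hxy⟩ => Metric.mem_cthickening_of_dist_le x y δ Ω hy hxy

lemma volume_closedNbhd_ne_top (hΩ : Bornology.IsBounded Ω) (δ : ℝ) :
    volume (closedNbhd Ω δ) ≠ ⊤ :=
  (hΩ.cthickening.subset (closedNbhd_subset_cthickening Ω δ)).measure_lt_top.ne

lemma isBoundedUnder_le_volume_closedNbhd (hΩ : Bornology.IsBounded Ω) :
    IsBoundedUnder (· ≤ ·) (𝓝[>] 0) fun δ : ℝ => volume.real (closedNbhd Ω δ) := by
  refine isBoundedUnder_of_eventually_le (a := volume.real (closedNbhd Ω 1)) ?_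
  filter_upwards [Ioo_mem_nhdsGT one_pos] with δ hδ
  exact measureReal_mono (closedNbhd_mono hδ.2.le) (volume_closedNbhd_ne_top hΩ 1)

theorem lowerMinkowskiCodim_le_of_eventually_le_volume (hΩ : Bornology.IsBounded Ω) {c s : ℝ}
    (hc : 0 < c) (h : ∀ᶠ δ in 𝓝[>] 0, c * δ ^ s ≤ volume.real (closedNbhd Ω δ)) :
    lowerMinkowskiCodim Ω ≤ s :=
  limsup_log_div_log_le hc h (isBoundedUnder_le_volume_closedNbhd hΩ)

lemma eventually_Ioo_subset_closedNbhd {C p : ℝ} (hC : 0 < C) (hp : 0 < p)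
    (h : ∀ᶠ x in 𝓝[>] 0, ∃ y ∈ Ω, |x - y| ≤ C * x ^ p) :
    ∀ᶠ δ in 𝓝[>] 0, Ioo 0 ((δ / C) ^ p⁻¹) ⊆ closedNbhd Ω δ := by
  obtain ⟨ε, hε, hnear⟩ := mem_nhdsGT_iff_exists_Ioo_subset.1 h
  have hpow : 0 < ε ^ p := Real.rpow_pos_of_pos hε p
  filter_upwards [Ioo_mem_nhdsGT (mul_pos hpow hC)] with δ hδ x hx
  have hδC : 0 < δ / C := div_pos hδ.1 hC
  have hxp : x ^ p < δ / C := (Real.lt_rpow_inv_iff_of_pos hx.1.le hδC.le hp).1 hx.2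
  have hxε : x < ε :=
    (Real.rpow_lt_rpow_iff hx.1.le (le_of_lt hε) hp).1 (hxp.trans ((div_lt_iff₀ hC).2 hδ.2))
  obtain ⟨y, hy, hxy⟩ := hnear ⟨hx.1, hxε⟩
  exact ⟨y, hy, hxy.trans ((le_div_iff₀' hC).1 hxp.le)⟩

theorem lowerMinkowskiCodim_le_inv_of_eventually_near (hΩ : Bornology.IsBounded Ω) {C p : ℝ}
    (hC : 0 < C) (hp : 0 < p) (h : ∀ᶠ x in 𝓝[>] 0, ∃ y ∈ Ω, |x - y| ≤ C * x ^ p) :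
    lowerMinkowskiCodim Ω ≤ p⁻¹ := by
  refine lowerMinkowskiCodim_le_of_eventually_le_volume hΩ
    (inv_pos.2 (Real.rpow_pos_of_pos hC p⁻¹)) ?_
  filter_upwards [eventually_Ioo_subset_closedNbhd hC hp h, self_mem_nhdsWithin] with δ hsub hδ
  have hδ0 : 0 ≤ δ := le_of_lt hδ
  calc (C ^ p⁻¹)⁻¹ * δ ^ p⁻¹ = (δ / C) ^ p⁻¹ := by
        rw [Real.div_rpow hδ0 hC.le, div_eq_inv_mul]
    _ = volume.real (Ioo 0 ((δ / C) ^ p⁻¹)) := by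
        rw [Real.volume_real_Ioo_of_le (by positivity), sub_zero]
    _ ≤ volume.real (closedNbhd Ω δ) := measureReal_mono hsub (volume_closedNbhd_ne_top hΩ δ)

end MinkowskiCodimension

section ShiftedReciprocals

lemma abs_sub_one_div_floor_add_le {x θ : ℝ} (hx : 0 < x) (hx2 : x ≤ 1 / 2) (hθ : θ ≤ 1 / x) :
    |x - 1 / (⌊1 / x - θ⌋₊ + θ)| ≤ 2 * x ^ 2 := by
  set A : ℝ := ⌊1 / x - θ⌋₊ + θ
  have hA_le : A ≤ 1 / x := le_sub_iff_add_le.1 (Nat.floor_le (sub_nonneg.2 hθ))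
  have hA_gt : 1 / x - 1 < A := by linarith [Nat.lt_floor_add_one (1 / x - θ)]
  have hx_inv : 2 ≤ 1 / x := (le_one_div two_pos hx).2 hx2
  have hA : 0 < A := by linarith
  have hxA : x ≤ 1 / A := (le_one_div hx hA).2 hA_le
  have hA_inv : 1 / A ≤ 2 * x := by
    have hhalf : 1 / (2 * x) ≤ A := by
      rw [mul_comm, ← div_div]
      linarith
    exact (one_div_le (by positivity) hA).1 hhalf
  calc |x - 1 / A| = 1 / A - x := by rw [abs_sub_comm, abs_of_nonneg (sub_nonneg.2 hxA)]
    _ = 1 / A * (1 / x - A) * x := by field_simp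
    _ ≤ 2 * x * 1 * x := by gcongr; linarith
    _ = 2 * x ^ 2 := by ring

lemma eventually_exists_abs_sub_le_two_mul_sq {Ω : Set ℝ} {θ : ℝ}
    (h : ∀ᶠ n : ℕ in atTop, 1 / (n + θ) ∈ Ω) :
    ∀ᶠ x in 𝓝[>] 0, ∃ y ∈ Ω, |x - y| ≤ 2 * x ^ 2 := by
  have hinv : Tendsto (fun x : ℝ => 1 / x) (𝓝[>] 0) atTop := by
    simpa only [one_div] using tendsto_inv_nhdsGT_zero (𝕜 := ℝ)
  have hfloor : Tendsto (fun x : ℝ => ⌊1 / x - θ⌋₊) (𝓝[>] 0) atTop :=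
    tendsto_nat_floor_atTop.comp (tendsto_atTop_add_const_right _ (-θ) hinv)
  filter_upwards [hfloor.eventually h, hinv.eventually_ge_atTop θ,
    Ioo_mem_nhdsGT (one_half_pos (α := ℝ))] with x hmem hθ hx
  exact ⟨_, hmem, abs_sub_one_div_floor_add_le hx.1 hx.2.le hθ⟩

theorem lowerMinkowskiCodim_le_half_of_eventually_one_div_add_mem {Ω : Set ℝ}
    (hΩ : Bornology.IsBounded Ω) {θ : ℝ} (h : ∀ᶠ n : ℕ in atTop, 1 / (n + θ) ∈ Ω) :
    lowerMinkowskiCodim Ω ≤ 1 / 2 := by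
  rw [one_div]
  refine lowerMinkowskiCodim_le_inv_of_eventually_near hΩ two_pos two_pos ?_
  simpa only [Real.rpow_two] using eventually_exists_abs_sub_le_two_mul_sq h

end ShiftedReciprocals

section ContinuedFractions

lemma cfVal_nonneg : ∀ a : List ℕ, 0 ≤ cfVal a
  | [] => le_rfl
  | n :: t => one_div_nonneg.2 (add_nonneg n.cast_nonneg (cfVal_nonneg t))

lemma cfVal_le_one {a : List ℕ} (ha : ∀ n ∈ a, 1 ≤ n) : cfVal a ≤ 1 := by
  cases a with
  | nil => exact zero_le_one
  | cons n t =>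
    have hn : (1 : ℝ) ≤ n := by exact_mod_cast ha n List.mem_cons_self
    exact div_le_one_of_le₀ (by linarith [cfVal_nonneg t]) (by linarith [cfVal_nonneg t])

lemma isBounded_Cset (m : ℕ) : Bornology.IsBounded (Cset m) := by
  refine (Metric.isBounded_Icc (0 : ℝ) 1).subset ?_
  rintro _ ⟨a, -, ha, rfl⟩
  exact ⟨cfVal_nonneg a, cfVal_le_one ha.1⟩

lemma isCFWord_of_forall_two_le {a : List ℕ} (ha : ∀ n ∈ a, 2 ≤ n) : isCFWord a :=
  ⟨fun n hn => one_le_two.trans (ha n hn), fun n hn => ha n (List.mem_of_getLast? hn)⟩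

lemma one_div_add_cfVal_replicate_two_mem_Cset (k : ℕ) {n : ℕ} (hn : 2 ≤ n) :
    1 / (n + cfVal (List.replicate k 2)) ∈ Cset (k + 1) := by
  refine ⟨n :: List.replicate k 2, by simp, isCFWord_of_forall_two_le ?_, rfl⟩
  exact List.forall_mem_cons.2 ⟨hn, fun d hd => (List.eq_of_mem_replicate hd).ge⟩

end ContinuedFractions

/-- The lower Minkowski dimension of `C_m` is at least `1/2`:
`limsup_{δ → 0⁺} log λ(V_δ(C_m)) / log δ ≤ 1/2`. -/
theorem lower_minkowski_dim_Cm_ge (m : ℕ) (hm : 0 < m) :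
    Filter.limsup
      (fun δ : ℝ => Real.log (volume (closedNbhd (Cset m) δ)).toReal / Real.log δ)
      (nhdsWithin (0 : ℝ) (Set.Ioi 0)) ≤ (1 / 2 : ℝ) := by
  obtain ⟨k, rfl⟩ := Nat.exists_eq_add_one.2 hm
  have hmem : ∀ᶠ n : ℕ in atTop, 1 / (n + cfVal (List.replicate k 2)) ∈ Cset (k + 1) :=
    (eventually_ge_atTop 2).mono fun _ => one_div_add_cfVal_replicate_two_mem_Cset k
  exact lowerMinkowskiCodim_le_half_of_eventually_one_div_add_mem (isBounded_Cset _) hmem
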